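/- For the elephant random walk with memory parameter p ∈ [0, 1) on a Cayley graph that is the d-regular tree T_d (d ≥ 3), the random variables √n · [Δ_n/n − (d − 2)/d − (2(1 − pd)/(d − 1)) · Ξ_n] converge in distribution, as n → ∞, to a centered Gaussian law N(0, 4(d − 1)/d²). -/

import Mathlib

open MeasureTheory ProbabilityTheory Filter

noncomputable section

/-- The Cayley graph of a group with respect to a finite set of generators. -/
def cayleyGraph {G : Type*} [Group G] (S : Finset G) : SimpleGraph G where
  Adj x y := x ≠ y ∧ (y * x⁻¹ ∈ S ∨ x * y⁻¹ ∈ S)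
  symm := by
    constructor
    rintro x y ⟨h1, h2⟩
    refine ⟨h1.symm, ?_⟩
    rcases h2 with h | h
    · exact Or.inr h
    · exact Or.inl h
  loopless := ⟨fun x h => h.1 rfl⟩

/-- The elephant random walk (ERW) with memory parameter `p` on the Cayley graph of a
group `G` with respect to a symmetric generating set `S` of cardinality `d`, not
containing the identity, whose Cayley graph is a tree (hence the `d`-regular tree
`T_d`).  The steps are `g 1, g 2, …` (the value of `g 0` is irrelevant).  The law of
the process is characterised by: `g 1` is uniform on `S`, and, conditionally on the
first `n` steps being `s 1, …, s n`, the next step `g (n+1)` equals `a ∈ S` with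
probability `p * N/n + ((1-p)/(d-1)) * (n-N)/n`, where `N = #{1 ≤ k ≤ n : s k = a}`;
this is precisely the probability that the walker, recalling a uniform past epoch
`D ∈ {1, …, n}`, repeats `g D` with probability `p` and takes any given other step
with probability `(1-p)/(d-1)`. -/
structure ERW (G : Type*) [Group G] [DecidableEq G] (d : ℕ) (p : ℝ)
    (Ω : Type*) [MeasurableSpace Ω] (P : Measure Ω) where
  S : Finset G
  card_S : S.card = d
  symm_S : ∀ s ∈ S, s⁻¹ ∈ S
  one_not_mem : (1 : G) ∉ S
  tree : (cayleyGraph S).IsTree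
  g : ℕ → Ω → G
  meas_g : ∀ n a, MeasurableSet {ω | g n ω = a}
  mem_S : ∀ n, 1 ≤ n → ∀ ω, g n ω ∈ S
  init : ∀ a ∈ S, (P {ω | g 1 ω = a}).toReal = 1 / d
  update : ∀ n, 1 ≤ n → ∀ s : ℕ → G, ∀ a ∈ S,
    (P ({ω | ∀ k ∈ Finset.Icc 1 n, g k ω = s k} ∩ {ω | g (n + 1) ω = a})).toReal
      = (p * ((((Finset.Icc 1 n).filter fun k => s k = a).card : ℝ) / n)
          + (1 - p) / ((d : ℝ) - 1)
            * (((n : ℝ) - (((Finset.Icc 1 n).filter fun k => s k = a).card : ℝ)) / n))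
        * (P {ω | ∀ k ∈ Finset.Icc 1 n, g k ω = s k}).toReal

namespace ERW

variable {G : Type*} [Group G] [DecidableEq G] {d : ℕ} {p : ℝ}
  {Ω : Type*} [MeasurableSpace Ω] {P : Measure Ω}

/-- The position `w n = g n ⋯ g 1` of the walk at time `n`. -/
def pos (E : ERW G d p Ω P) : ℕ → Ω → G
  | 0 => fun _ => 1
  | n + 1 => fun ω => E.g (n + 1) ω * E.pos n ω

/-- `Δ n`: the (word-metric) distance of the walker from the root at time `n`. -/
def dist (E : ERW G d p Ω P) (n : ℕ) (ω : Ω) : ℕ :=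
  (cayleyGraph E.S).dist 1 (E.pos n ω)

/-- `N n a`: the number of `a`-steps taken by time `n`. -/
def count (E : ERW G d p Ω P) (a : G) (n : ℕ) (ω : Ω) : ℕ :=
  ((Finset.Icc 1 n).filter fun k => E.g k ω = a).card

/-- `γ n`: the unique step decreasing the distance to the root by 1
(a junk value if the walker is at the root). -/
def gammaStep (E : ERW G d p Ω P) (n : ℕ) (ω : Ω) : G :=
  @Classical.epsilon G ⟨1⟩ fun s =>
    s ∈ E.S ∧ (cayleyGraph E.S).dist 1 (s * E.pos n ω) + 1 = E.dist n ω

/-- `ℓ n = N n (γ n)` if the walker is away from the root, and `0` otherwise. -/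
def ell (E : ERW G d p Ω P) (n : ℕ) (ω : Ω) : ℕ :=
  if E.pos n ω = 1 then 0 else E.count (E.gammaStep n ω) n ω

/-- `Ξ n = (1/n) ∑_{k=0}^{n-1} (ℓ k / k - 1(Δ k > 0)/d)` (with the convention
`ℓ 0 / 0 = 0`, automatic since division by zero yields zero). -/
def Xi (E : ERW G d p Ω P) (n : ℕ) (ω : Ω) : ℝ :=
  (1 / n) * ∑ k ∈ Finset.range n,
    ((E.ell k ω : ℝ) / k - (if 0 < E.dist k ω then 1 else 0) / d)

/-- The natural filtration `F n` generated by the steps up to time `n`. -/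
def filt (E : ERW G d p Ω P) (n : ℕ) : MeasurableSpace Ω :=
  ⨆ k ∈ Finset.Icc 1 n, MeasurableSpace.comap (E.g k) ⊤

/-- `G n = E[Δ (n+1) - Δ n | F n]`. -/
def drift (E : ERW G d p Ω P) (n : ℕ) : Ω → ℝ :=
  P[fun ω => ((E.dist (n + 1) ω : ℝ) - (E.dist n ω : ℝ)) | E.filt n]

/-- The martingale differences `Y k = Δ k - Δ (k-1) - G (k-1)`. -/
def mdiff (E : ERW G d p Ω P) (k : ℕ) (ω : Ω) : ℝ :=
  (E.dist k ω : ℝ) - (E.dist (k - 1) ω : ℝ) - E.drift (k - 1) ω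

/-- The martingale `M n = ∑_{k=1}^n Y k`. -/
def mart (E : ERW G d p Ω P) (n : ℕ) (ω : Ω) : ℝ :=
  ∑ k ∈ Finset.Icc 1 n, E.mdiff k ω

end ERW

/-- The rate `r n`: `√n` in the subcritical regime `p < p_d = (d+1)/(2d)`,
`√(n / log n)` in the critical regime `p = p_d`, and `n ^ (d(1-p)/(d-1))` in the
supercritical regime `p > p_d`. -/
def rate (p : ℝ) (d : ℕ) (n : ℕ) : ℝ :=
  if p < ((d : ℝ) + 1) / (2 * d) then Real.sqrt n
  else if p = ((d : ℝ) + 1) / (2 * d) then Real.sqrt ((n : ℝ) / Real.log n)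
  else (n : ℝ) ^ ((d : ℝ) * (1 - p) / ((d : ℝ) - 1))



/-- A self-improving bound: `n x_n = m_n + c ∑_{k<n} x_k`, `|c|<1`, `m_n = o(n)` forces `x_n → 0`. -/
theorem aux_contract (x m : ℕ → ℝ) (c : ℝ) (hc : |c| < 1) (hx : ∀ n, |x n| ≤ 1)
    (h : ∀ n : ℕ, (n : ℝ) * x n = m n + c * ∑ k ∈ Finset.range n, x k)
    (hm : Tendsto (fun n : ℕ => m n / n) atTop (nhds 0)) :
    Tendsto x atTop (nhds 0) := by
  set r := (1 + |c|) / 2 with hr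
  have hr1 : r < 1 := by rw [hr]; linarith
  have hr0 : 0 < r := by rw [hr]; have := abs_nonneg c; linarith
  have step : ∀ L : ℝ, 0 < L → (∀ᶠ n in atTop, |x n| ≤ L) → ∀ᶠ n in atTop, |x n| ≤ r * L := by
    intro L hL hev
    obtain ⟨N, hN⟩ := eventually_atTop.1 hev
    have hsum : ∀ n : ℕ, |∑ k ∈ Finset.range n, x k| ≤ N + L * n := by
      intro n
      induction n with
      | zero => simp
      | succ n ih =>
        by_cases hn : n < N
        · calc |∑ k ∈ Finset.range (n+1), x k| ≤ ∑ k ∈ Finset.range (n+1), |x k| :=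
                Finset.abs_sum_le_sum_abs _ _
            _ ≤ ∑ k ∈ Finset.range (n+1), 1 := Finset.sum_le_sum fun k _ => hx k
            _ = ((n+1 : ℕ) : ℝ) := by simp
            _ ≤ N := by exact_mod_cast hn
            _ ≤ _ := by
                have : 0 ≤ L * ((n+1 : ℕ) : ℝ) := by positivity
                linarith
        · rw [Finset.sum_range_succ]
          have := abs_add_le (∑ k ∈ Finset.range n, x k) (x n)
          have := hN n (by omega)
          push_cast
          linarith
    have h1 : Tendsto (fun n : ℕ => |m n / n| + |c| * (N / (n:ℝ))) atTop (nhds 0) := by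
      have := (hm.abs).add ((tendsto_const_div_atTop_nhds_zero_nat (N:ℝ)).const_mul |c|)
      simpa using this
    have hpos : 0 < (1 - |c|) / 2 * L := by
      have : 0 < 1 - |c| := by linarith
      positivity
    filter_upwards [h1.eventually (gt_mem_nhds hpos), eventually_gt_atTop 0] with n hn hn0
    have hn0' : (0:ℝ) < n := by exact_mod_cast hn0
    have e : x n = m n / n + c * ((∑ k ∈ Finset.range n, x k) / n) := by
      have := h n
      field_simp
      linarith
    have e2 : |(∑ k ∈ Finset.range n, x k) / n| ≤ N / n + L := by
      rw [abs_div, abs_of_pos hn0', div_le_iff₀ hn0']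
      have := hsum n
      have e3 : (N / n + L) * (n:ℝ) = N + L * n := by field_simp
      linarith
    calc |x n| ≤ |m n / n| + |c| * |(∑ k ∈ Finset.range n, x k) / n| := by
          rw [← abs_mul]; conv_lhs => rw [e]
          exact abs_add_le _ _
      _ ≤ |m n / n| + |c| * (N / n + L) := by gcongr
      _ ≤ r * L := by rw [hr]; nlinarith
  have all : ∀ j : ℕ, ∀ᶠ n in atTop, |x n| ≤ r ^ j := by
    intro j
    induction j with
    | zero => exact Eventually.of_forall fun n => by simpa using hx n
    | succ j ih => rw [pow_succ']; exact step _ (by positivity) ih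
  rw [Metric.tendsto_nhds]
  intro ε hε
  obtain ⟨j, hj⟩ := exists_pow_lt_of_lt_one hε hr1
  filter_upwards [all j] with n hn
  rw [Real.dist_eq, sub_zero]
  linarith

/-- Strong law for bounded orthogonal increments. -/
theorem aux_slln {Ω : Type*} [MeasurableSpace Ω] (P : Measure Ω) [IsProbabilityMeasure P]
    (Y : ℕ → Ω → ℝ) (hY : ∀ n, Measurable (Y n)) (C : ℝ) (hC : ∀ n ω, |Y n ω| ≤ C)
    (ho : ∀ n, ∫ ω, (∑ k ∈ Finset.range n, Y k ω) * Y n ω ∂P = 0) :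
    ∀ᵐ ω ∂P, Tendsto (fun n : ℕ => (∑ k ∈ Finset.range n, Y k ω) / n) atTop (nhds 0) := by
  have hC0 : 0 ≤ C := by
    have : Nonempty Ω := (inferInstance : NeZero P).1 |> fun h => by
      by_contra hne
      rw [not_nonempty_iff] at hne
      exact h (Measure.eq_zero_of_isEmpty P)
    exact (abs_nonneg _).trans (hC 0 (Classical.arbitrary Ω))
  set M : ℕ → Ω → ℝ := fun n ω => ∑ k ∈ Finset.range n, Y k ω with hMdef
  have hM : ∀ n, Measurable (M n) := fun n => Finset.measurable_sum _ fun k _ => hY k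
  have hMb : ∀ n ω, |M n ω| ≤ n * C := fun n ω => by
    calc |M n ω| ≤ ∑ k ∈ Finset.range n, |Y k ω| := Finset.abs_sum_le_sum_abs _ _
      _ ≤ ∑ k ∈ Finset.range n, C := Finset.sum_le_sum fun k _ => hC k ω
      _ = n * C := by simp
  have hI2 : ∀ n, Integrable (fun ω => M n ω ^ 2) P := fun n =>
    Integrable.of_bound ((hM n).pow_const 2).aestronglyMeasurable ((n * C)^2)
      (Eventually.of_forall fun ω => by
        rw [Real.norm_eq_abs, abs_pow]
        exact pow_le_pow_left₀ (abs_nonneg _) (hMb n ω) 2)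
  have hIY : ∀ n, Integrable (fun ω => Y n ω ^ 2) P := fun n =>
    Integrable.of_bound ((hY n).pow_const 2).aestronglyMeasurable (C^2)
      (Eventually.of_forall fun ω => by
        rw [Real.norm_eq_abs, abs_pow]
        exact pow_le_pow_left₀ (abs_nonneg _) (hC n ω) 2)
  have hIMY : ∀ n, Integrable (fun ω => M n ω * Y n ω) P := fun n =>
    Integrable.of_bound ((hM n).mul (hY n)).aestronglyMeasurable (n * C * C)
      (Eventually.of_forall fun ω => by
        rw [Real.norm_eq_abs, abs_mul]
        exact mul_le_mul (hMb n ω) (hC n ω) (abs_nonneg _) (by positivity))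
  have hE : ∀ n : ℕ, ∫ ω, M n ω ^ 2 ∂P ≤ n * C ^ 2 := by
    intro n
    induction n with
    | zero => simp [hMdef]
    | succ n ih =>
      have e : ∀ ω, M (n+1) ω ^ 2 = M n ω ^ 2 + 2 * (M n ω * Y n ω) + Y n ω ^ 2 := by
        intro ω; simp only [hMdef, Finset.sum_range_succ]; ring
      simp_rw [e]
      have e1 : ∫ ω, (M n ω ^ 2 + 2 * (M n ω * Y n ω) + Y n ω ^ 2) ∂P
          = ∫ ω, M n ω ^ 2 ∂P + 2 * ∫ ω, M n ω * Y n ω ∂P + ∫ ω, Y n ω ^ 2 ∂P := by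
        rw [← integral_const_mul, ← integral_add (hI2 n) ((hIMY n).const_mul 2),
          ← integral_add _ (hIY n)]
        exact (hI2 n).add ((hIMY n).const_mul 2)
      rw [e1, ho n]
      have : ∫ ω, Y n ω ^ 2 ∂P ≤ C ^ 2 := by
        calc ∫ ω, Y n ω ^ 2 ∂P ≤ ∫ ω, C ^ 2 ∂P := by
              refine integral_mono (hIY n) (integrable_const _) fun ω => ?_
              exact sq_le_sq' (abs_le.1 (hC n ω)).1 (abs_le.1 (hC n ω)).2
          _ = C ^ 2 := by simp
      push_cast
      linarith
  -- the subsequence of squares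
  have hsub : ∀ᵐ ω ∂P, Tendsto (fun n : ℕ => M (n^2) ω / ((n:ℝ)^2)) atTop (nhds 0) := by
    have hlt : ∫⁻ ω, ∑' n : ℕ, ENNReal.ofReal ((M (n^2) ω / ((n:ℝ)^2))^2) ∂P ≠ ⊤ := by
      rw [lintegral_tsum (fun n => ((((hM _).div_const _).pow_const 2).ennreal_ofReal).aemeasurable)]
      have hle : ∀ n : ℕ, ∫⁻ ω, ENNReal.ofReal ((M (n^2) ω / ((n:ℝ)^2))^2) ∂P
          ≤ ENNReal.ofReal (C^2 * (1 / (n:ℝ)^2)) := by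
        intro n
        rw [← ofReal_integral_eq_lintegral_ofReal]
        · apply ENNReal.ofReal_le_ofReal
          simp_rw [div_pow]
          rw [integral_div]
          have := hE (n^2)
          rcases Nat.eq_zero_or_pos n with h0 | h0
          · subst h0; simp
          · have : (0:ℝ) < n := by exact_mod_cast h0
            rw [div_le_iff₀ (by positivity)]
            push_cast at *
            calc _ ≤ _ := hE (n^2)
              _ = _ := by push_cast; field_simp
        · simp_rw [div_pow]; exact (hI2 _).div_const _
        · exact Eventually.of_forall fun ω => sq_nonneg _
      refine ne_top_of_le_ne_top ?_ (ENNReal.tsum_le_tsum hle)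
      rw [← ENNReal.ofReal_tsum_of_nonneg (fun n => by positivity)
        ((Real.summable_one_div_nat_pow.2 (by norm_num)).mul_left _)]
      exact ENNReal.ofReal_ne_top
    have hae := ae_lt_top' (AEMeasurable.tsum
      (fun n => ((((hM _).div_const _).pow_const 2).ennreal_ofReal).aemeasurable)) hlt
    filter_upwards [hae] with ω hω
    have h1 := ENNReal.tendsto_atTop_zero_of_tsum_ne_top hω.ne
    have h2 := (ENNReal.tendsto_toReal ENNReal.zero_ne_top).comp h1
    have h3 : Tendsto (fun n : ℕ => (M (n^2) ω / ((n:ℝ)^2))^2) atTop (nhds 0) := by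
      refine h2.congr fun n => ?_
      simp [ENNReal.toReal_ofReal (sq_nonneg _)]
    have h4 := h3.sqrt
    rw [Real.sqrt_zero] at h4
    refine (tendsto_zero_iff_abs_tendsto_zero _).2 (h4.congr fun n => ?_)
    simp [Real.sqrt_sq_eq_abs]
  filter_upwards [hsub] with ω hω
  have hsq : Tendsto Nat.sqrt atTop atTop := by
    refine tendsto_atTop.2 fun b => ?_
    filter_upwards [eventually_ge_atTop (b*b)] with m hm
    exact Nat.le_sqrt.2 hm
  have hA : Tendsto (fun m : ℕ => |M ((Nat.sqrt m)^2) ω / ((Nat.sqrt m:ℝ)^2)|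
      + 2 * C / (Nat.sqrt m : ℝ)) atTop (nhds 0) := by
    have h1 := (hω.comp hsq).abs
    have h2 := (tendsto_const_div_atTop_nhds_zero_nat (2*C)).comp hsq
    simpa [Function.comp_def] using h1.add h2
  refine squeeze_zero_norm' ?_ hA
  filter_upwards [eventually_gt_atTop 0] with m hm
  set n := Nat.sqrt m with hn
  have hn0 : 0 < n := Nat.sqrt_pos.2 hm
  have hl : n^2 ≤ m := Nat.sqrt_le' m
  have hu : m ≤ n^2 + 2*n := by
    have := Nat.sqrt_le_add m
    rw [← hn] at this; nlinarith
  have hd : |M m ω - M (n^2) ω| ≤ 2 * n * C := by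
    have e : M m ω - M (n^2) ω = ∑ k ∈ Finset.Ico (n^2) m, Y k ω := by
      rw [Finset.sum_Ico_eq_sub _ hl]
    rw [e]
    calc _ ≤ ∑ k ∈ Finset.Ico (n^2) m, |Y k ω| := Finset.abs_sum_le_sum_abs _ _
      _ ≤ ∑ k ∈ Finset.Ico (n^2) m, C := Finset.sum_le_sum fun k _ => hC k ω
      _ = ((m - n^2 : ℕ) : ℝ) * C := by simp
      _ ≤ 2 * n * C := by
        gcongr
        have : m - n^2 ≤ 2 * n := by omega
        exact_mod_cast this
  have hnr : (0:ℝ) < n := by exact_mod_cast hn0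
  have hmr : ((n:ℝ)^2) ≤ m := by exact_mod_cast hl
  have hmM : |M m ω| ≤ |M (n^2) ω| + 2 * n * C := by
    have := abs_sub_abs_le_abs_sub (M m ω) (M (n^2) ω)
    linarith
  rw [Real.norm_eq_abs, abs_div, Nat.abs_cast]
  calc |M m ω| / m ≤ (|M (n^2) ω| + 2 * n * C) / (n:ℝ)^2 := by gcongr
    _ = _ := by
      rw [abs_div, abs_of_pos (by positivity : (0:ℝ) < (n:ℝ)^2)]
      field_simp


/-- Third order Taylor bound for `exp (i x)`. -/
theorem aux_taylor (x : ℝ) (hx : |x| ≤ 1) :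
    ‖Complex.exp (x * Complex.I) - (1 + x * Complex.I - (x:ℂ)^2/2)‖ ≤ |x|^3 := by
  have h := Complex.exp_bound (x := x * Complex.I) (n := 3) (by simpa using hx) (by norm_num)
  have e : ∑ m ∈ Finset.range 3, ((x:ℂ) * Complex.I)^m / (m.factorial : ℂ)
      = 1 + x * Complex.I - (x:ℂ)^2/2 := by
    simp [Finset.sum_range_succ, mul_pow]
    ring
  rw [e] at h
  refine h.trans ?_
  have : ‖(x:ℂ) * Complex.I‖ = |x| := by simp
  rw [this]
  have h3 : 0 ≤ |x|^3 := by positivity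
  norm_num [Nat.factorial]
  nlinarith

/-- Martingale central limit theorem with bounded increments, at the level of
characteristic functions. -/
theorem aux_mclt {Ω : Type*} [MeasurableSpace Ω] (P : Measure Ω) [IsProbabilityMeasure P]
    (Y V : ℕ → Ω → ℝ) (hY : ∀ n, Measurable (Y n)) (hV : ∀ n, Measurable (V n))
    (C : ℝ) (hC0 : 0 ≤ C) (hYb : ∀ n ω, |Y n ω| ≤ C) (hVb : ∀ n ω, |V n ω| ≤ C)
    (v : ℝ) (hv : 0 ≤ v)
    (hlim : ∀ᵐ ω ∂P, Tendsto (fun n => V n ω) atTop (nhds v))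
    (h1 : ∀ (n : ℕ) (s : ℝ), ∫ ω, Complex.exp (s * (∑ k ∈ Finset.range n, Y k ω : ℝ) * Complex.I)
      * (Y n ω : ℂ) ∂P = 0)
    (h2 : ∀ (n : ℕ) (s : ℝ), ∫ ω, Complex.exp (s * (∑ k ∈ Finset.range n, Y k ω : ℝ) * Complex.I)
      * ((Y n ω : ℂ)^2 - (V n ω : ℂ)) ∂P = 0) (t : ℝ) :
    Tendsto (fun n : ℕ => ∫ ω, Complex.exp ((t / √n : ℝ) * (∑ k ∈ Finset.range n, Y k ω : ℝ)
      * Complex.I) ∂P) atTop (nhds (Complex.exp (-(v * t^2 / 2 : ℝ)))) := by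
  set M : ℕ → Ω → ℝ := fun n ω => ∑ k ∈ Finset.range n, Y k ω with hMdef
  have hM : ∀ n, Measurable (M n) := fun n => Finset.measurable_sum _ fun k _ => hY k
  set X : ℝ → ℕ → Ω → ℂ := fun s n ω => Complex.exp (s * (M n ω : ℂ) * Complex.I) with hX
  have hXm : ∀ s n, Measurable (X s n) := fun s n => by
    have := hM n
    simp only [hX]
    fun_prop
  have hXn : ∀ s n ω, ‖X s n ω‖ = 1 := fun s n ω => by
    simp only [hX]
    rw [← Complex.ofReal_mul, Complex.norm_exp_ofReal_mul_I]
  have hXi : ∀ s n (f : Ω → ℂ) (K : ℝ), Measurable f → (∀ ω, ‖f ω‖ ≤ K) →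
      Integrable (fun ω => X s n ω * f ω) P := fun s n f K hf hK =>
    Integrable.of_bound ((hXm s n).mul hf).aestronglyMeasurable K
      (Eventually.of_forall fun ω => by rw [norm_mul, hXn, one_mul]; exact hK ω)
  have hX0 : ∀ s n, Integrable (X s n) P := fun s n =>
    Integrable.of_bound (hXm s n).aestronglyMeasurable 1
      (Eventually.of_forall fun ω => (hXn s n ω).le)
  set a : ℝ → ℕ → ℂ := fun s n => ∫ ω, X s n ω ∂P with ha
  set w : ℕ → ℝ := fun n => ∫ ω, |V n ω - v| ∂P with hw
  have hwi : ∀ n, Integrable (fun ω => |V n ω - v|) P := fun n =>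
    Integrable.of_bound (((hV n).sub_const v).norm).aestronglyMeasurable (C + v)
      (Eventually.of_forall fun ω => by
        rw [Real.norm_eq_abs, abs_abs]
        have := abs_sub (V n ω) v
        have := hVb n ω
        rw [abs_of_nonneg hv] at *
        linarith)
  have hwlim : Tendsto w atTop (nhds 0) := by
    have : Tendsto w atTop (nhds (∫ ω, (0:ℝ) ∂P)) := by
      refine tendsto_integral_of_dominated_convergence (fun _ => C + v)
        (fun n => (hwi n).aestronglyMeasurable) (integrable_const _)
        (fun n => Eventually.of_forall fun ω => ?_) ?_
      · rw [Real.norm_eq_abs, abs_abs]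
        have := abs_sub (V n ω) v
        have := hVb n ω
        rw [abs_of_nonneg hv] at *
        linarith
      · filter_upwards [hlim] with ω hω
        have := (hω.sub_const v).abs
        simpa using this
    simpa using this
  -- one step
  have hstep : ∀ s : ℝ, |s| * C ≤ 1 → ∀ n,
      ‖a s (n+1) - ((1 - s^2 * v / 2 : ℝ) : ℂ) * a s n‖ ≤ s^2/2 * w n + (|s| * C)^3 := by
    intro s hs n
    set R : Ω → ℂ := fun ω => Complex.exp ((s * Y n ω : ℝ) * Complex.I)
      - (1 + (s * Y n ω : ℝ) * Complex.I - ((s * Y n ω : ℝ) : ℂ)^2/2) with hR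
    have hRb : ∀ ω, ‖R ω‖ ≤ (|s| * C)^3 := fun ω => by
      have hle : |s * Y n ω| ≤ |s| * C := by
        rw [abs_mul]; exact mul_le_mul_of_nonneg_left (hYb n ω) (abs_nonneg _)
      exact (aux_taylor _ (hle.trans hs)).trans (pow_le_pow_left₀ (abs_nonneg _) hle 3)
    have hYn := hY n
    have hVn := hV n
    have hRm : Measurable R := by simp only [hR]; fun_prop
    have e : ∀ ω, X s (n+1) ω = ((1 - s^2 * v / 2 : ℝ) : ℂ) * X s n ω
        + (s * Complex.I) * (X s n ω * (Y n ω : ℂ))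
        + (-(s:ℂ)^2/2) * (X s n ω * ((Y n ω : ℂ)^2 - (V n ω : ℂ)))
        + X s n ω * ((-(s:ℂ)^2/2) * ((V n ω - v : ℝ) : ℂ) + R ω) := by
      intro ω
      have e1 : X s (n+1) ω = X s n ω * Complex.exp ((s * Y n ω : ℝ) * Complex.I) := by
        simp only [hX, hMdef, Finset.sum_range_succ]
        rw [← Complex.exp_add]
        congr 1
        push_cast
        ring
      rw [e1]
      simp only [hR]
      push_cast
      ring
    have hD1 : Integrable (fun ω => X s n ω * (Y n ω : ℂ)) P :=
      hXi s n _ C (by fun_prop) (fun ω => by simpa using hYb n ω)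
    have hD2 : Integrable (fun ω => X s n ω * ((Y n ω : ℂ)^2 - (V n ω : ℂ))) P :=
      hXi s n _ (C^2 + C) (by fun_prop) (fun ω => by
        refine (norm_sub_le _ _).trans (add_le_add ?_ ?_)
        · rw [norm_pow]
          exact pow_le_pow_left₀ (norm_nonneg _) (by simpa using hYb n ω) 2
        · simpa using hVb n ω)
    have hD3b : ∀ ω, ‖(-(s:ℂ)^2/2) * ((V n ω - v : ℝ) : ℂ) + R ω‖
        ≤ s^2/2 * |V n ω - v| + (|s| * C)^3 := fun ω => by
      refine (norm_add_le _ _).trans (add_le_add ?_ (hRb ω))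
      rw [norm_mul, Complex.norm_real, Real.norm_eq_abs]
      simp
    have hD3 : Integrable (fun ω => X s n ω * ((-(s:ℂ)^2/2) * ((V n ω - v : ℝ) : ℂ) + R ω)) P :=
      hXi s n _ (s^2/2 * (C + v) + (|s| * C)^3) (by fun_prop) (fun ω => by
        refine (hD3b ω).trans ?_
        have := abs_sub (V n ω) v
        have := hVb n ω
        rw [abs_of_nonneg hv] at *
        gcongr
        linarith)
    have e2 : a s (n+1) = ((1 - s^2 * v / 2 : ℝ) : ℂ) * a s n
        + ∫ ω, X s n ω * ((-(s:ℂ)^2/2) * ((V n ω - v : ℝ) : ℂ) + R ω) ∂P := by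
      have i1 := (hX0 s n).const_mul ((1 - s^2 * v / 2 : ℝ) : ℂ)
      have i2 := hD1.const_mul (s * Complex.I)
      have i3 := hD2.const_mul (-(s:ℂ)^2/2)
      simp only [ha]
      simp_rw [e]
      rw [integral_add ?_ hD3, integral_add ?_ i3, integral_add i1 i2, integral_const_mul,
        integral_const_mul, integral_const_mul, h1 n s, h2 n s]
      · ring
      · exact i1.add i2
      · exact (i1.add i2).add i3
    rw [e2, add_sub_cancel_left]
    calc _ ≤ ∫ ω, ‖X s n ω * ((-(s:ℂ)^2/2) * ((V n ω - v : ℝ) : ℂ) + R ω)‖ ∂P :=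
          norm_integral_le_integral_norm _
      _ ≤ ∫ ω, (s^2/2 * |V n ω - v| + (|s| * C)^3) ∂P := by
          refine integral_mono hD3.norm (((hwi n).const_mul _).add (integrable_const _)) fun ω => ?_
          simp only [norm_mul, hXn, one_mul]
          simpa using hD3b ω
      _ = _ := by
          rw [integral_add ((hwi n).const_mul _) (integrable_const _), integral_const_mul]
          simp [hw]
  -- accumulate
  have hacc : ∀ s : ℝ, |s| * C ≤ 1 → s^2 * v / 2 ≤ 1 → ∀ n : ℕ,
      ‖a s n - (((1 - s^2 * v / 2 : ℝ)) ^ n : ℝ)‖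
        ≤ s^2/2 * ∑ k ∈ Finset.range n, w k + n * (|s| * C)^3 := by
    intro s hs hs2 n
    induction n with
    | zero => simp [ha, hX, hMdef]
    | succ n ih =>
      set ρ : ℝ := 1 - s^2 * v / 2 with hρ
      have hρ0 : 0 ≤ ρ := by rw [hρ]; linarith
      have hρ1 : ρ ≤ 1 := by rw [hρ]; have : 0 ≤ s^2 * v / 2 := by positivity
                             linarith
      have e : a s (n+1) - ((ρ ^ (n+1) : ℝ) : ℂ) = (a s (n+1) - (ρ : ℂ) * a s n)
          + (ρ : ℂ) * (a s n - ((ρ ^ n : ℝ) : ℂ)) := by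
        push_cast; ring
      rw [e]
      have hb := hstep s hs n
      rw [← hρ] at hb
      have hb2 : ‖(ρ : ℂ) * (a s n - ((ρ ^ n : ℝ) : ℂ))‖ ≤ ‖a s n - ((ρ ^ n : ℝ) : ℂ)‖ := by
        rw [norm_mul, Complex.norm_real, Real.norm_eq_abs, abs_of_nonneg hρ0]
        exact mul_le_of_le_one_left (norm_nonneg _) hρ1
      rw [Finset.sum_range_succ]
      push_cast
      push_cast at ih hb hb2
      refine (norm_add_le _ _).trans ?_
      push_cast
      nlinarith [hb, hb2, ih]
  have hs0 : Tendsto (fun n : ℕ => t / √(n:ℝ)) atTop (nhds 0) :=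
    tendsto_const_nhds.div_atTop (Real.tendsto_sqrt_atTop.comp tendsto_natCast_atTop_atTop)
  have hmain : Tendsto (fun n : ℕ => ((1 - (t/√(n:ℝ))^2 * v / 2 : ℝ)) ^ n) atTop
      (nhds (Real.exp (-(v * t^2/2)))) := by
    refine (Real.tendsto_one_add_div_pow_exp (-(v * t^2/2))).congr' ?_
    filter_upwards [eventually_gt_atTop 0] with n hn
    have : (0:ℝ) < n := by exact_mod_cast hn
    rw [div_pow, Real.sq_sqrt this.le]
    congr 1
    field_simp
    ring
  have hdiff : Tendsto (fun n : ℕ => a (t/√(n:ℝ)) n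
      - (((1 - (t/√(n:ℝ))^2 * v / 2 : ℝ)) ^ n : ℝ)) atTop (nhds 0) := by
    have hb : Tendsto (fun n : ℕ => t^2/2 * ((n:ℝ)⁻¹ * ∑ k ∈ Finset.range n, w k)
        + t^2 * C^3 * |t/√(n:ℝ)|) atTop (nhds 0) := by
      have := ((hwlim.cesaro).const_mul (t^2/2)).add ((hs0.abs).const_mul (t^2*C^3))
      simpa using this
    refine squeeze_zero_norm' ?_ hb
    have q1 : ∀ᶠ n : ℕ in atTop, |t/√(n:ℝ)| * C ≤ 1 := by
      have : Tendsto (fun n : ℕ => |t/√(n:ℝ)| * C) atTop (nhds 0) := by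
        simpa using (hs0.abs).mul_const C
      exact this.eventually (ge_mem_nhds one_pos)
    have q2 : ∀ᶠ n : ℕ in atTop, (t/√(n:ℝ))^2 * v / 2 ≤ 1 := by
      have : Tendsto (fun n : ℕ => (t/√(n:ℝ))^2 * v / 2) atTop (nhds 0) := by
        simpa using ((hs0.pow 2).mul_const v).div_const 2
      exact this.eventually (ge_mem_nhds one_pos)
    filter_upwards [q1, q2, eventually_gt_atTop 0] with n hn1 hn2 hn
    refine (hacc _ hn1 hn2 n).trans (le_of_eq ?_)
    have hn' : (0:ℝ) < n := by exact_mod_cast hn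
    have e : (t/√(n:ℝ))^2 = t^2/n := by rw [div_pow, Real.sq_sqrt hn'.le]
    have e' : |t/√(n:ℝ)|^2 = t^2/n := by rw [sq_abs, e]
    rw [mul_pow, pow_succ |t/√(n:ℝ)|, e', e]
    field_simp
  have hfin := hdiff.add ((Complex.continuous_ofReal.tendsto _).comp hmain)
  rw [zero_add] at hfin
  have e3 : Complex.exp (-(v * t^2 / 2 : ℝ)) = ((Real.exp (-(v * t^2/2)) : ℝ) : ℂ) := by
    push_cast; rfl
  rw [e3]
  refine hfin.congr fun n => ?_
  simp only [ha, hX, Function.comp_apply, sub_add_cancel]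
  rfl

/-- Structure of neighbours of a vertex in a tree. -/
theorem aux_tree_unique {V : Type*} {T : SimpleGraph V} (hT : T.IsTree) (o x y z : V)
    (hy : T.Adj y x) (hz : T.Adj z x) (h1 : T.dist o y + 1 = T.dist o x)
    (h2 : T.dist o z + 1 = T.dist o x) : y = z := by
  obtain ⟨p, hp⟩ := (hT.connected o y).exists_walk_length_eq_dist
  obtain ⟨q, hq⟩ := (hT.connected o z).exists_walk_length_eq_dist
  have hp' : (p.concat hy).IsPath := by
    apply SimpleGraph.Walk.isPath_of_length_eq_dist
    rw [SimpleGraph.Walk.length_concat]; omega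
  have hq' : (q.concat hz).IsPath := by
    apply SimpleGraph.Walk.isPath_of_length_eq_dist
    rw [SimpleGraph.Walk.length_concat]; omega
  have e := (hT.isAcyclic.subsingleton_path o x).elim ⟨_, hp'⟩ ⟨_, hq'⟩
  have e2 : p.concat hy = q.concat hz := congrArg Subtype.val e
  have e3 := congrArg SimpleGraph.Walk.penultimate e2
  simpa using e3

namespace ERW

variable {G : Type*} [Group G] [DecidableEq G] {d : ℕ} {p : ℝ}
  {Ω : Type*} [MeasurableSpace Ω] {P : Measure Ω}

theorem adj_mul (E : ERW G d p Ω P) (s x : G) (hs : s ∈ E.S) :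
    (cayleyGraph E.S).Adj x (s * x) := by
  refine ⟨?_, Or.inl (by simpa using hs)⟩
  intro h
  have : s = 1 := by simpa using h
  exact E.one_not_mem (this ▸ hs)

theorem exists_down (E : ERW G d p Ω P) (x : G) (hx : x ≠ 1) :
    ∃ s, s ∈ E.S ∧ (cayleyGraph E.S).dist 1 (s * x) + 1 = (cayleyGraph E.S).dist 1 x := by
  obtain ⟨w, hw⟩ := (E.tree.connected x 1).exists_walk_length_eq_dist
  cases w with
  | nil => exact absurd rfl hx
  | @cons _ y _ h q =>
    have hy : y * x⁻¹ ∈ E.S := by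
      rcases h.2 with h | h
      · exact h
      · simpa using E.symm_S _ h
    refine ⟨y * x⁻¹, hy, ?_⟩
    rw [inv_mul_cancel_right]
    have h1 : (cayleyGraph E.S).dist y 1 ≤ q.length := SimpleGraph.dist_le q
    rw [SimpleGraph.Walk.length_cons, SimpleGraph.dist_comm] at hw
    rw [SimpleGraph.dist_comm] at h1
    have := E.tree.dist_eq_dist_add_one_of_adj 1 h
    omega

theorem gamma_spec (E : ERW G d p Ω P) (n : ℕ) (ω : Ω) (h : E.pos n ω ≠ 1) :
    E.gammaStep n ω ∈ E.S ∧
      (cayleyGraph E.S).dist 1 (E.gammaStep n ω * E.pos n ω) + 1 = E.dist n ω :=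
  Classical.epsilon_spec (E.exists_down (E.pos n ω) h)

/-- Indicator that step `k+1` decreases the distance. -/
def back (E : ERW G d p Ω P) (k : ℕ) (ω : Ω) (a : G) : ℝ :=
  if E.pos k ω ≠ 1 ∧ a = E.gammaStep k ω then 1 else 0

theorem dist_succ (E : ERW G d p Ω P) (n : ℕ) (ω : Ω) :
    (E.dist (n+1) ω : ℝ) = E.dist n ω + (1 - 2 * E.back n ω (E.g (n+1) ω)) := by
  have hg := E.mem_S (n+1) (by omega) ω
  have hadj := E.adj_mul _ (E.pos n ω) hg
  have hd : E.dist (n+1) ω = (cayleyGraph E.S).dist 1 (E.g (n+1) ω * E.pos n ω) := rfl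
  have hd0 : E.dist n ω = (cayleyGraph E.S).dist 1 (E.pos n ω) := rfl
  have hor := E.tree.dist_eq_dist_add_one_of_adj 1 hadj
  rw [← hd, ← hd0] at hor
  unfold back
  split_ifs with h
  · have := (E.gamma_spec n ω h.1).2
    rw [← h.2, ← hd] at this
    rw [← this]; push_cast; ring
  · rcases hor with hor | hor
    · exfalso
      have hx : E.pos n ω ≠ 1 := by
        intro hx
        rw [hx, SimpleGraph.dist_self] at hd0
        omega
      apply h
      refine ⟨hx, ?_⟩
      have hs := E.gamma_spec n ω hx
      have := aux_tree_unique E.tree 1 (E.pos n ω) _ _ hadj.symm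
        (E.adj_mul _ (E.pos n ω) hs.1).symm (by rw [← hd, ← hd0]; omega) (by rw [hs.2, hd0])
      exact mul_right_cancel this
    · rw [hor]; push_cast; ring

theorem dist_eq_sum (E : ERW G d p Ω P) (n : ℕ) (ω : Ω) :
    (E.dist n ω : ℝ) = ∑ k ∈ Finset.range n, (1 - 2 * E.back k ω (E.g (k+1) ω)) := by
  induction n with
  | zero => simp [dist, pos]
  | succ n ih => rw [dist_succ, ih, Finset.sum_range_succ]

theorem dist_pos_iff (E : ERW G d p Ω P) (n : ℕ) (ω : Ω) :
    0 < E.dist n ω ↔ E.pos n ω ≠ 1 := by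
  unfold dist
  rw [Nat.pos_iff_ne_zero, Ne, (E.tree.connected).dist_eq_zero_iff]
  exact ne_comm

/-- `X` depends only on the first `n` steps. -/
def Adp (E : ERW G d p Ω P) (n : ℕ) {β : Type*} (X : Ω → β) : Prop :=
  ∀ ω ω', (∀ k ∈ Finset.Icc 1 n, E.g k ω = E.g k ω') → X ω = X ω'

/-- The history of the first `n` steps. -/
def hist (E : ERW G d p Ω P) (n : ℕ) (ω : Ω) : Fin n → E.S :=
  fun i => ⟨E.g (i+1) ω, E.mem_S _ (by omega) ω⟩

theorem hist_eq_iff (E : ERW G d p Ω P) (n : ℕ) (ω ω' : Ω) :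
    E.hist n ω = E.hist n ω' ↔ ∀ k ∈ Finset.Icc 1 n, E.g k ω = E.g k ω' := by
  constructor
  · intro h k hk
    rw [Finset.mem_Icc] at hk
    have := congrFun h ⟨k-1, by omega⟩
    simp only [hist, Subtype.mk.injEq] at this
    rwa [show k - 1 + 1 = k by omega] at this
  · intro h
    funext i
    simp only [hist, Subtype.mk.injEq]
    exact h _ (Finset.mem_Icc.2 ⟨by omega, by omega⟩)

theorem meas_hist (E : ERW G d p Ω P) (n : ℕ) (A : Set (Fin n → E.S)) :
    MeasurableSet (E.hist n ⁻¹' A) := by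
  have : E.hist n ⁻¹' A = ⋃ h ∈ A, ⋂ i : Fin n, {ω | E.g (i+1) ω = h i} := by
    ext ω
    simp only [Set.mem_preimage, Set.mem_iUnion, Set.mem_iInter, Set.mem_ofPred_eq, exists_prop]
    constructor
    · intro h
      exact ⟨_, h, fun i => rfl⟩
    · rintro ⟨h, hA, hi⟩
      have : E.hist n ω = h := by
        funext i
        exact Subtype.ext (hi i)
      rwa [this]
  rw [this]
  exact MeasurableSet.biUnion (Set.to_countable A) fun h _ =>
    MeasurableSet.iInter fun i => E.meas_g _ _

theorem Adp.measurable {E : ERW G d p Ω P} {n : ℕ} {β : Type*} [MeasurableSpace β] {X : Ω → β}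
    (hX : E.Adp n X) : Measurable X := by
  intro T _
  have : X ⁻¹' T = E.hist n ⁻¹' (E.hist n '' (X ⁻¹' T)) := by
    ext ω
    constructor
    · intro h; exact ⟨ω, h, rfl⟩
    · rintro ⟨ω', h, he⟩
      have := hX ω' ω ((E.hist_eq_iff n ω' ω).1 he)
      simp only [Set.mem_preimage] at *
      rwa [← this]
  rw [this]
  exact E.meas_hist n _

theorem Adp.finite_range {E : ERW G d p Ω P} {n : ℕ} {β : Type*} {X : Ω → β}
    (hX : E.Adp n X) : (Set.range X).Finite := by
  refine Set.Finite.subset (Set.finite_range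
    (fun h : Set.range (E.hist n) => X (Classical.choose h.2))) ?_
  rintro _ ⟨ω, rfl⟩
  refine ⟨⟨E.hist n ω, ω, rfl⟩, ?_⟩
  exact hX _ _ ((E.hist_eq_iff n _ _).1
    (Classical.choose_spec (⟨ω, rfl⟩ : ∃ y, E.hist n y = E.hist n ω)))

theorem Adp.exists_bound {E : ERW G d p Ω P} {n : ℕ} {X : Ω → ℂ}
    (hX : E.Adp n X) : ∃ K : ℝ, ∀ ω, ‖X ω‖ ≤ K := by
  obtain ⟨K, hK⟩ := isBounded_iff_forall_norm_le.1 hX.finite_range.isBounded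
  exact ⟨K, fun ω => hK _ ⟨ω, rfl⟩⟩

theorem Adp.integrable [IsProbabilityMeasure P] {E : ERW G d p Ω P} {n : ℕ} {X : Ω → ℂ}
    (hX : E.Adp n X) : Integrable X P := by
  obtain ⟨K, hK⟩ := hX.exists_bound
  exact Integrable.of_bound hX.measurable.aestronglyMeasurable K (Eventually.of_forall hK)

theorem Adp.mono {E : ERW G d p Ω P} {n m : ℕ} {β : Type*} {X : Ω → β}
    (hX : E.Adp n X) (h : n ≤ m) : E.Adp m X := fun ω ω' hω =>
  hX ω ω' fun k hk => hω k (by rw [Finset.mem_Icc] at *; omega)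

theorem Adp.comp₂ {E : ERW G d p Ω P} {n : ℕ} {β γ δ : Type*} {X : Ω → β} {Y : Ω → γ}
    (hX : E.Adp n X) (hY : E.Adp n Y) (f : β → γ → δ) : E.Adp n (fun ω => f (X ω) (Y ω)) :=
  fun ω ω' hω => by
    change f (X ω) (Y ω) = f (X ω') (Y ω')
    rw [hX ω ω' hω, hY ω ω' hω]

theorem Adp.comp {E : ERW G d p Ω P} {n : ℕ} {β γ : Type*} {X : Ω → β}
    (hX : E.Adp n X) (f : β → γ) : E.Adp n (fun ω => f (X ω)) :=
  hX.comp₂ hX fun a _ => f a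

theorem Adp.sum {E : ERW G d p Ω P} {n : ℕ} {X : ℕ → Ω → ℝ} (s : Finset ℕ)
    (hX : ∀ k ∈ s, E.Adp n (X k)) : E.Adp n (fun ω => ∑ k ∈ s, X k ω) :=
  fun ω ω' hω => Finset.sum_congr rfl fun k hk => hX k hk ω ω' hω

theorem adp_g (E : ERW G d p Ω P) (n : ℕ) : E.Adp (n+1) (E.g (n+1)) :=
  fun ω ω' h => h _ (by simp)

theorem adp_pos (E : ERW G d p Ω P) (n : ℕ) : E.Adp n (E.pos n) := by
  induction n with
  | zero => intro ω ω' _; rfl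
  | succ n ih => exact (E.adp_g n).comp₂ (ih.mono (by omega)) (fun a b => a * b)

theorem adp_gamma (E : ERW G d p Ω P) (n : ℕ) : E.Adp n (E.gammaStep n) := by
  intro ω ω' h
  have := E.adp_pos n ω ω' h
  simp only [gammaStep, dist, this]

theorem adp_count (E : ERW G d p Ω P) (a : G) (n : ℕ) : E.Adp n (E.count a n) := by
  intro ω ω' h
  unfold count
  congr 1
  exact Finset.filter_congr fun k hk => by rw [h k hk]

/-- Deviation of the empirical frequency from `1/d`. -/
def dev (E : ERW G d p Ω P) (a : G) (n : ℕ) (ω : Ω) : ℝ :=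
  if n = 0 then 0 else (E.count a n ω : ℝ) / n - 1 / d

/-- Conditional probability of the step `a`. -/
def prb (E : ERW G d p Ω P) (a : G) (n : ℕ) (ω : Ω) : ℝ :=
  1 / d + (p * d - 1) / ((d:ℝ) - 1) * E.dev a n ω

theorem adp_dev (E : ERW G d p Ω P) (a : G) (n : ℕ) : E.Adp n (E.dev a n) :=
  (E.adp_count a n).comp fun c => if n = 0 then 0 else (c : ℝ) / n - 1 / d

theorem adp_prb (E : ERW G d p Ω P) (a : G) (n : ℕ) : E.Adp n (E.prb a n) :=
  (E.adp_dev a n).comp fun c => 1 / d + (p * d - 1) / ((d:ℝ) - 1) * c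

theorem sum_count (E : ERW G d p Ω P) (n : ℕ) (ω : Ω) : ∑ a ∈ E.S, E.count a n ω = n := by
  unfold count
  rw [← Finset.card_eq_sum_card_fiberwise (f := fun k => E.g k ω)]
  · simp
  · intro k hk
    exact E.mem_S k (by simp at hk; omega) ω

theorem sum_dev (E : ERW G d p Ω P) (hd : 3 ≤ d) (n : ℕ) (ω : Ω) :
    ∑ a ∈ E.S, E.dev a n ω = 0 := by
  unfold dev
  split_ifs with h
  · simp
  · rw [Finset.sum_sub_distrib, ← Finset.sum_div, ← Nat.cast_sum, E.sum_count]
    have : (d:ℝ) ≠ 0 := by positivity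
    have : (n:ℝ) ≠ 0 := by exact_mod_cast h
    simp [E.card_S]
    field_simp
    simp

theorem sum_prb (E : ERW G d p Ω P) (hd : 3 ≤ d) (n : ℕ) (ω : Ω) :
    ∑ a ∈ E.S, E.prb a n ω = 1 := by
  unfold prb
  rw [Finset.sum_add_distrib, ← Finset.mul_sum, E.sum_dev hd]
  have : (d:ℝ) ≠ 0 := by positivity
  simp [E.card_S]
  field_simp

theorem prb_eq (E : ERW G d p Ω P) (hd : 3 ≤ d) (a : G) (n : ℕ) (hn : n ≠ 0) (ω : Ω) :
    E.prb a n ω = p * ((E.count a n ω : ℝ) / n)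
      + (1 - p) / ((d : ℝ) - 1) * (((n : ℝ) - (E.count a n ω : ℝ)) / n) := by
  have h1 : (d:ℝ) ≠ 0 := by positivity
  have h2 : (n:ℝ) ≠ 0 := by exact_mod_cast hn
  have h3 : (d:ℝ) - 1 ≠ 0 := by
    have : (3:ℝ) ≤ d := by exact_mod_cast hd
    linarith
  unfold prb dev
  rw [if_neg hn]
  field_simp
  ring

theorem count_le (E : ERW G d p Ω P) (a : G) (n : ℕ) (ω : Ω) : E.count a n ω ≤ n := by
  unfold count
  refine (Finset.card_filter_le _ _).trans ?_
  simp

theorem prb_nonneg (E : ERW G d p Ω P) (hd : 3 ≤ d) (hp0 : 0 ≤ p) (hp1 : p < 1)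
    (a : G) (n : ℕ) (ω : Ω) : 0 ≤ E.prb a n ω := by
  rcases Nat.eq_zero_or_pos n with h | h
  · subst h; simp [prb, dev]
  · rw [E.prb_eq hd a n h.ne']
    have h3 : 0 < (d:ℝ) - 1 := by
      have : (3:ℝ) ≤ d := by exact_mod_cast hd
      linarith
    have h4 : 0 ≤ 1 - p := by linarith
    have h5 : 0 ≤ (n:ℝ) - (E.count a n ω : ℝ) := by
      have : (E.count a n ω : ℝ) ≤ n := by exact_mod_cast E.count_le a n ω
      linarith
    positivity

theorem prb_le_one (E : ERW G d p Ω P) (hd : 3 ≤ d) (hp0 : 0 ≤ p) (hp1 : p < 1)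
    (a : G) (ha : a ∈ E.S) (n : ℕ) (ω : Ω) : E.prb a n ω ≤ 1 := by
  rw [← E.sum_prb hd n ω]
  exact Finset.single_le_sum (f := fun a => E.prb a n ω)
    (fun b _ => E.prb_nonneg hd hp0 hp1 b n ω) ha

theorem upd (E : ERW G d p Ω P) [IsProbabilityMeasure P] (hd : 3 ≤ d) (n : ℕ) (ω₀ : Ω) (a : G)
    (ha : a ∈ E.S) :
    (P ({ω | E.hist n ω = E.hist n ω₀} ∩ {ω | E.g (n+1) ω = a})).toReal
      = E.prb a n ω₀ * (P {ω | E.hist n ω = E.hist n ω₀}).toReal := by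
  simp_rw [E.hist_eq_iff]
  rcases Nat.eq_zero_or_pos n with h | h
  · subst h
    simp [prb, dev]
    simpa using E.init a ha
  · rw [E.prb_eq hd a n h.ne']
    exact E.update n h (fun k => E.g k ω₀) a ha

theorem key1 (E : ERW G d p Ω P) [IsProbabilityMeasure P] (hd : 3 ≤ d) (n : ℕ) (a : G)
    (ha : a ∈ E.S) (X : Ω → ℂ) (hX : E.Adp n X) :
    ∫ ω, X ω * (if E.g (n+1) ω = a then 1 else 0) ∂P = ∫ ω, X ω * (E.prb a n ω : ℂ) ∂P := by
  classical
  have hga : MeasurableSet {ω | E.g (n+1) ω = a} := E.meas_g _ _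
  have hI1 : Integrable (fun ω => X ω * (if E.g (n+1) ω = a then 1 else 0)) P :=
    ((hX.mono (Nat.le_succ n)).comp₂ (E.adp_g n)
      (fun x b => x * (if b = a then 1 else 0))).integrable
  have hI2 : Integrable (fun ω => X ω * (E.prb a n ω : ℂ)) P :=
    (hX.comp₂ (E.adp_prb a n) (fun x b => x * (b : ℂ))).integrable
  have split : ∀ F : Ω → ℂ, Integrable F P →
      ∫ ω, F ω ∂P = ∑ h : Fin n → E.S, ∫ ω in {ω | E.hist n ω = h}, F ω ∂P := by
    intro F hF
    rw [← integral_iUnion_fintype (μ := P) (s := fun h => {ω | E.hist n ω = h})]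
    · have : ⋃ h, {ω | E.hist n ω = h} = Set.univ := by
        ext ω; simp
      rw [this, Measure.restrict_univ]
    · intro h; exact E.meas_hist n {h}
    · intro h h' hne
      rw [Function.onFun, Set.disjoint_left]
      intro ω h1 h2
      exact hne (h1.symm.trans h2)
    · intro h; exact hF.integrableOn
  rw [split _ hI1, split _ hI2]
  refine Finset.sum_congr rfl fun h _ => ?_
  by_cases hex : ∃ ω₀, E.hist n ω₀ = h
  · obtain ⟨ω₀, rfl⟩ := hex
    have hm : MeasurableSet {ω | E.hist n ω = E.hist n ω₀} := E.meas_hist n {E.hist n ω₀}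
    have e1 : ∫ ω in {ω | E.hist n ω = E.hist n ω₀}, X ω * (if E.g (n+1) ω = a then 1 else 0) ∂P
        = ∫ ω in {ω | E.hist n ω = E.hist n ω₀},
            Set.indicator {ω | E.g (n+1) ω = a} (fun _ => X ω₀) ω ∂P := by
      refine setIntegral_congr_fun hm fun ω hω => ?_
      have := hX ω ω₀ ((E.hist_eq_iff n ω ω₀).1 hω)
      simp [Set.indicator, this]
    have e2 : ∫ ω in {ω | E.hist n ω = E.hist n ω₀}, X ω * (E.prb a n ω : ℂ) ∂P
        = ∫ ω in {ω | E.hist n ω = E.hist n ω₀}, X ω₀ * (E.prb a n ω₀ : ℂ) ∂P := by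
      refine setIntegral_congr_fun hm fun ω hω => ?_
      have h1 := hX ω ω₀ ((E.hist_eq_iff n ω ω₀).1 hω)
      have h2 := E.adp_prb a n ω ω₀ ((E.hist_eq_iff n ω ω₀).1 hω)
      simp [h1, h2]
    rw [e1, e2, setIntegral_indicator hga, setIntegral_const, setIntegral_const]
    simp only [Measure.real]
    rw [E.upd hd n ω₀ a ha]
    simp
    ring
  · have : {ω | E.hist n ω = h} = ∅ := by
      ext ω; simp only [Set.mem_ofPred_eq, Set.mem_empty_iff_false, iff_false]
      exact fun hh => hex ⟨ω, hh⟩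
    rw [this]; simp

theorem key (E : ERW G d p Ω P) [IsProbabilityMeasure P] (hd : 3 ≤ d) (n : ℕ)
    (F : Ω → G → ℂ) (hF : ∀ a, E.Adp n (fun ω => F ω a)) :
    ∫ ω, F ω (E.g (n+1) ω) ∂P = ∫ ω, ∑ a ∈ E.S, F ω a * (E.prb a n ω : ℂ) ∂P := by
  rw [integral_finsetSum _ fun a _ =>
    ((hF a).comp₂ (E.adp_prb a n) (fun x b => x * (b : ℂ))).integrable]
  have e : ∀ ω, F ω (E.g (n+1) ω) = ∑ a ∈ E.S, F ω a * (if E.g (n+1) ω = a then 1 else 0) := by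
    intro ω
    simp [E.mem_S (n+1) (by omega) ω]
  simp_rw [e]
  rw [integral_finsetSum _ fun a _ => (((hF a).mono (Nat.le_succ n)).comp₂ (E.adp_g n)
      (fun x b => x * (if b = a then 1 else 0))).integrable]
  exact Finset.sum_congr rfl fun a ha => E.key1 hd n a ha _ (hF a)

/-- Conditional probability that step `k+1` decreases the distance. -/
def bq (E : ERW G d p Ω P) (k : ℕ) (ω : Ω) : ℝ :=
  if E.pos k ω = 1 then 0 else E.prb (E.gammaStep k ω) k ω

/-- The martingale differences of the distance process. -/
def Yv (E : ERW G d p Ω P) (k : ℕ) (ω : Ω) : ℝ :=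
  2 * (E.bq k ω - E.back k ω (E.g (k+1) ω))

theorem adp_bq (E : ERW G d p Ω P) (k : ℕ) : E.Adp k (E.bq k) := by
  intro ω ω' h
  unfold bq
  rw [E.adp_pos k ω ω' h, E.adp_gamma k ω ω' h, E.adp_prb _ k ω ω' h]

theorem adp_back (E : ERW G d p Ω P) (k : ℕ) (a : G) : E.Adp k (fun ω => E.back k ω a) := by
  intro ω ω' h
  simp only [back]
  rw [E.adp_pos k ω ω' h, E.adp_gamma k ω ω' h]

theorem adp_Yv (E : ERW G d p Ω P) (k : ℕ) : E.Adp (k+1) (E.Yv k) := by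
  intro ω ω' h
  have h' : ∀ j ∈ Finset.Icc 1 k, E.g j ω = E.g j ω' := fun j hj =>
    h j (by rw [Finset.mem_Icc] at *; omega)
  have h1 := E.adp_back k (E.g (k+1) ω') ω ω' h'
  simp only at h1
  simp only [Yv]
  rw [E.adp_bq k ω ω' h', E.adp_g k ω ω' h, h1]

theorem bq_mem (E : ERW G d p Ω P) (hd : 3 ≤ d) (hp0 : 0 ≤ p) (hp1 : p < 1) (k : ℕ) (ω : Ω) :
    0 ≤ E.bq k ω ∧ E.bq k ω ≤ 1 := by
  unfold bq
  split_ifs with h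
  · simp
  · exact ⟨E.prb_nonneg hd hp0 hp1 _ _ _,
      E.prb_le_one hd hp0 hp1 _ (E.gamma_spec k ω h).1 _ _⟩

theorem back_cases (E : ERW G d p Ω P) (k : ℕ) (ω : Ω) (a : G) :
    E.back k ω a = 0 ∨ E.back k ω a = 1 := by
  unfold back
  split_ifs <;> simp

theorem Yv_bound (E : ERW G d p Ω P) (hd : 3 ≤ d) (hp0 : 0 ≤ p) (hp1 : p < 1) (k : ℕ) (ω : Ω) :
    |E.Yv k ω| ≤ 2 := by
  unfold Yv
  have := E.bq_mem hd hp0 hp1 k ω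
  rw [abs_le]
  rcases E.back_cases k ω (E.g (k+1) ω) with h | h <;> rw [h] <;> constructor <;> linarith

theorem sum_back (E : ERW G d p Ω P) (k : ℕ) (ω : Ω) :
    ∑ a ∈ E.S, E.back k ω a * E.prb a k ω = E.bq k ω := by
  unfold bq back
  split_ifs with h
  · simp [h]
  · simp [h, (E.gamma_spec k ω h).1]

theorem Yv_orth (E : ERW G d p Ω P) [IsProbabilityMeasure P] (hd : 3 ≤ d) (n : ℕ) (X : Ω → ℂ)
    (hX : E.Adp n X) : ∫ ω, X ω * (E.Yv n ω : ℂ) ∂P = 0 := by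
  have h := E.key hd n (fun ω a => X ω * ((2 * (E.bq n ω - E.back n ω a) : ℝ) : ℂ)) fun a =>
    hX.comp₂ ((E.adp_bq n).comp₂ (E.adp_back n a) (fun x y => 2 * (x - y)))
      (fun x y => x * ((y : ℝ) : ℂ))
  simp only [Yv]
  rw [h]
  have : ∀ ω, ∑ a ∈ E.S, X ω * ((2 * (E.bq n ω - E.back n ω a) : ℝ) : ℂ) * (E.prb a n ω : ℂ)
      = 0 := by
    intro ω
    have e : ∑ a ∈ E.S, X ω * ((2 * (E.bq n ω - E.back n ω a) : ℝ) : ℂ) * (E.prb a n ω : ℂ)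
      = X ω * ((2 * (E.bq n ω * ∑ a ∈ E.S, E.prb a n ω
          - ∑ a ∈ E.S, E.back n ω a * E.prb a n ω) : ℝ) : ℂ) := by
      rw [Finset.mul_sum, ← Finset.sum_sub_distrib, Finset.mul_sum, Complex.ofReal_sum,
        Finset.mul_sum]
      refine Finset.sum_congr rfl fun a _ => ?_
      push_cast; ring
    rw [e, E.sum_prb hd, E.sum_back]
    simp
  simp_rw [this]
  simp

theorem Yv_var (E : ERW G d p Ω P) [IsProbabilityMeasure P] (hd : 3 ≤ d) (n : ℕ) (X : Ω → ℂ)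
    (hX : E.Adp n X) :
    ∫ ω, X ω * ((E.Yv n ω : ℂ)^2 - ((4 * E.bq n ω * (1 - E.bq n ω) : ℝ) : ℂ)) ∂P = 0 := by
  have h := E.key hd n (fun ω a => X ω * (((2 * (E.bq n ω - E.back n ω a))^2
      - 4 * E.bq n ω * (1 - E.bq n ω) : ℝ) : ℂ)) fun a =>
    hX.comp₂ ((E.adp_bq n).comp₂ (E.adp_back n a) (fun x y => (2 * (x - y))^2 - 4 * x * (1 - x)))
      (fun x y => x * ((y : ℝ) : ℂ))
  have e0 : ∀ ω, X ω * ((E.Yv n ω : ℂ)^2 - ((4 * E.bq n ω * (1 - E.bq n ω) : ℝ) : ℂ))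
      = X ω * (((2 * (E.bq n ω - E.back n ω (E.g (n+1) ω)))^2
      - 4 * E.bq n ω * (1 - E.bq n ω) : ℝ) : ℂ) := by
    intro ω; simp only [Yv]; push_cast; ring
  simp_rw [e0]
  rw [h]
  have : ∀ ω, ∑ a ∈ E.S, X ω * (((2 * (E.bq n ω - E.back n ω a))^2
      - 4 * E.bq n ω * (1 - E.bq n ω) : ℝ) : ℂ) * (E.prb a n ω : ℂ) = 0 := by
    intro ω
    have e : ∑ a ∈ E.S, X ω * (((2 * (E.bq n ω - E.back n ω a))^2
      - 4 * E.bq n ω * (1 - E.bq n ω) : ℝ) : ℂ) * (E.prb a n ω : ℂ)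
      = X ω * (((8 * (E.bq n ω)^2 - 4 * E.bq n ω) * ∑ a ∈ E.S, E.prb a n ω
          + (4 - 8 * E.bq n ω) * ∑ a ∈ E.S, E.back n ω a * E.prb a n ω : ℝ) : ℂ) := by
      rw [Finset.mul_sum, Finset.mul_sum, ← Finset.sum_add_distrib, Complex.ofReal_sum,
        Finset.mul_sum]
      refine Finset.sum_congr rfl fun a _ => ?_
      rcases E.back_cases n ω a with hb | hb <;> rw [hb] <;> push_cast <;> ring
    rw [e, E.sum_prb hd, E.sum_back]
    push_cast; ring
  simp_rw [this]
  simp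

theorem adp_sumYv (E : ERW G d p Ω P) (n : ℕ) :
    E.Adp n (fun ω => ∑ k ∈ Finset.range n, E.Yv k ω) :=
  Adp.sum _ fun k hk => (E.adp_Yv k).mono (by rw [Finset.mem_range] at hk; omega)

theorem Yv_slln (E : ERW G d p Ω P) [IsProbabilityMeasure P] (hd : 3 ≤ d) (hp0 : 0 ≤ p)
    (hp1 : p < 1) :
    ∀ᵐ ω ∂P, Tendsto (fun n : ℕ => (∑ k ∈ Finset.range n, E.Yv k ω) / n) atTop (nhds 0) := by
  refine aux_slln P E.Yv (fun n => (E.adp_Yv n).measurable) 2 (E.Yv_bound hd hp0 hp1) fun n => ?_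
  have h := E.Yv_orth hd n _ ((E.adp_sumYv n).comp (fun x : ℝ => (x : ℂ)))
  simp_rw [← Complex.ofReal_mul] at h
  rw [integral_complex_ofReal] at h
  exact_mod_cast h

/-- The martingale differences of the counting process of `a`. -/
def Zv (E : ERW G d p Ω P) (a : G) (k : ℕ) (ω : Ω) : ℝ :=
  (if E.g (k+1) ω = a then 1 else 0) - E.prb a k ω

theorem adp_Zv (E : ERW G d p Ω P) (a : G) (k : ℕ) : E.Adp (k+1) (E.Zv a k) :=
  (E.adp_g k).comp₂ ((E.adp_prb a k).mono (by omega)) (fun x y => (if x = a then 1 else 0) - y)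

theorem Zv_slln (E : ERW G d p Ω P) [IsProbabilityMeasure P] (hd : 3 ≤ d) (hp0 : 0 ≤ p)
    (hp1 : p < 1) (a : G) (ha : a ∈ E.S) :
    ∀ᵐ ω ∂P, Tendsto (fun n : ℕ => (∑ k ∈ Finset.range n, E.Zv a k ω) / n) atTop (nhds 0) := by
  refine aux_slln P (E.Zv a) (fun n => (E.adp_Zv a n).measurable) 1 (fun k ω => ?_) fun n => ?_
  · have h1 := E.prb_nonneg hd hp0 hp1 a k ω
    have h2 := E.prb_le_one hd hp0 hp1 a ha k ω
    unfold Zv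
    rw [abs_le]
    split_ifs <;> constructor <;> linarith
  have hs : E.Adp n (fun ω => ∑ k ∈ Finset.range n, E.Zv a k ω) :=
    Adp.sum _ fun k hk => (E.adp_Zv a k).mono (by rw [Finset.mem_range] at hk; omega)
  have hc := hs.comp (fun x : ℝ => (x : ℂ))
  have h := E.key1 hd n a ha _ hc
  rw [← sub_eq_zero, ← integral_sub] at h
  · have e : ∀ ω, ((∑ k ∈ Finset.range n, E.Zv a k ω : ℝ) : ℂ) * (if E.g (n+1) ω = a then 1 else 0)
        - ((∑ k ∈ Finset.range n, E.Zv a k ω : ℝ) : ℂ) * (E.prb a n ω : ℂ)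
        = (((∑ k ∈ Finset.range n, E.Zv a k ω) * E.Zv a n ω : ℝ) : ℂ) := by
      intro ω
      conv_rhs => rw [Zv]
      split_ifs <;> push_cast <;> ring
    simp_rw [e] at h
    rw [integral_complex_ofReal] at h
    exact_mod_cast h
  · exact ((hc.mono (Nat.le_succ n)).comp₂ (E.adp_g n)
      (fun x b => x * (if b = a then 1 else 0))).integrable
  · exact (hc.comp₂ (E.adp_prb a n) (fun x b => x * (b : ℂ))).integrable

theorem count_succ (E : ERW G d p Ω P) (a : G) (n : ℕ) (ω : Ω) :
    (E.count a (n+1) ω : ℝ) = E.count a n ω + (if E.g (n+1) ω = a then 1 else 0) := by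
  unfold count
  rw [Finset.card_filter, Finset.card_filter, Finset.sum_Icc_succ_top (by omega)]
  push_cast
  rfl

theorem dev_mul (E : ERW G d p Ω P) (a : G) (n : ℕ) (ω : Ω) :
    (n:ℝ) * E.dev a n ω = E.count a n ω - n / d := by
  unfold dev
  split_ifs with h
  · subst h; simp [count]
  · have : (n:ℝ) ≠ 0 := by exact_mod_cast h
    field_simp

theorem dev_rec (E : ERW G d p Ω P) (a : G) (n : ℕ) (ω : Ω) :
    (n:ℝ) * E.dev a n ω = ∑ k ∈ Finset.range n, E.Zv a k ω
      + (p * d - 1) / ((d:ℝ) - 1) * ∑ k ∈ Finset.range n, E.dev a k ω := by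
  induction n with
  | zero => simp
  | succ n ih =>
    rw [E.dev_mul] at *
    rw [Finset.sum_range_succ, Finset.sum_range_succ, E.count_succ]
    have e : E.Zv a n ω = (if E.g (n+1) ω = a then 1 else 0)
      - (1 / d + (p * d - 1) / ((d:ℝ) - 1) * E.dev a n ω) := rfl
    rw [e]
    push_cast
    linear_combination ih

theorem dev_bound (E : ERW G d p Ω P) (hd : 3 ≤ d) (a : G) (n : ℕ) (ω : Ω) :
    |E.dev a n ω| ≤ 1 := by
  unfold dev
  split_ifs with h
  · simp
  · have h1 : (0:ℝ) < n := by exact_mod_cast Nat.pos_of_ne_zero h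
    have h2 : (E.count a n ω : ℝ) / n ≤ 1 := by
      rw [div_le_one h1]; exact_mod_cast E.count_le a n ω
    have h3 : 0 ≤ (E.count a n ω : ℝ) / n := by positivity
    have h4 : (1:ℝ) / d ≤ 1 := by
      rw [div_le_one (by positivity)]
      exact_mod_cast (by omega : 1 ≤ d)
    have h5 : (0:ℝ) ≤ 1 / d := by positivity
    rw [abs_le]; constructor <;> linarith

theorem coef_lt (hd : 3 ≤ d) (hp0 : 0 ≤ p) (hp1 : p < 1) :
    |(p * d - 1) / ((d:ℝ) - 1)| < 1 := by
  have h : (3:ℝ) ≤ d := by exact_mod_cast hd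
  have h3 : 0 < (d:ℝ) - 1 := by linarith
  rw [abs_div, abs_of_pos h3, div_lt_one h3, abs_lt]
  constructor <;> nlinarith

theorem dev_tendsto (E : ERW G d p Ω P) [IsProbabilityMeasure P] (hd : 3 ≤ d) (hp0 : 0 ≤ p)
    (hp1 : p < 1) :
    ∀ᵐ ω ∂P, ∀ a ∈ E.S, Tendsto (fun n : ℕ => E.dev a n ω) atTop (nhds 0) := by
  rw [Finset.eventually_all]
  intro a ha
  filter_upwards [E.Zv_slln hd hp0 hp1 a ha] with ω hω
  exact aux_contract _ _ _ (coef_lt hd hp0 hp1) (fun n => E.dev_bound hd a n ω)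
    (fun n => E.dev_rec a n ω) hω

/-- Almost surely the walk eventually leaves the root, and the conditional probability of
going back tends to `1/d`. -/
theorem transient (E : ERW G d p Ω P) [IsProbabilityMeasure P] (hd : 3 ≤ d) (hp0 : 0 ≤ p)
    (hp1 : p < 1) :
    ∀ᵐ ω ∂P, (∀ᶠ n in atTop, E.pos n ω ≠ 1) ∧
      Tendsto (fun n => E.bq n ω) atTop (nhds (1 / (d:ℝ))) := by
  have hd3 : (3:ℝ) ≤ d := by exact_mod_cast hd
  filter_upwards [E.dev_tendsto hd hp0 hp1, E.Yv_slln hd hp0 hp1] with ω h1 h2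
  set e : ℕ → ℝ := fun n => ∑ a ∈ E.S, |E.dev a n ω| with he
  have he0 : Tendsto e atTop (nhds 0) := by
    have := tendsto_finsetSum E.S fun a ha => (h1 a ha).abs
    simpa using this
  have hpe : ∀ n, E.pos n ω ≠ 1 → |E.bq n ω - 1 / d| ≤ e n := by
    intro n hn
    have hc := (coef_lt hd hp0 hp1).le
    have hs : |E.dev (E.gammaStep n ω) n ω| ≤ e n :=
      Finset.single_le_sum (f := fun a => |E.dev a n ω|) (fun a _ => abs_nonneg _)
        (E.gamma_spec n ω hn).1
    rw [bq, if_neg hn, prb, add_sub_cancel_left, abs_mul]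
    calc _ ≤ 1 * |E.dev (E.gammaStep n ω) n ω| := by gcongr
      _ ≤ e n := by rw [one_mul]; exact hs
  have hle : ∀ n, E.bq n ω ≤ 1 / d + e n := by
    intro n
    by_cases hn : E.pos n ω = 1
    · rw [bq, if_pos hn]
      have : 0 ≤ e n := Finset.sum_nonneg fun a _ => abs_nonneg _
      positivity
    · have := (abs_le.1 (hpe n hn)).2
      linarith
  have hev : ∀ᶠ n in atTop, E.pos n ω ≠ 1 := by
    have hl : Tendsto (fun n : ℕ => (1 - 2 / (d:ℝ)) - 2 * ((n:ℝ)⁻¹ * ∑ k ∈ Finset.range n, e k)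
        + (∑ k ∈ Finset.range n, E.Yv k ω) / n) atTop (nhds (1 - 2 / (d:ℝ))) := by
      have := ((tendsto_const_nhds (x := 1 - 2 / (d:ℝ))).sub (he0.cesaro.const_mul 2)).add h2
      simpa using this
    have hpos : 0 < 1 - 2 / (d:ℝ) := by
      rw [sub_pos, div_lt_one (by linarith)]; linarith
    filter_upwards [hl.eventually (lt_mem_nhds hpos), eventually_gt_atTop 0] with n hn hn0
    rw [← E.dist_pos_iff]
    have hnr : (0:ℝ) < n := by exact_mod_cast hn0
    have hb : (n:ℝ) * (1 - 2 / (d:ℝ)) - 2 * ∑ k ∈ Finset.range n, e k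
        + ∑ k ∈ Finset.range n, E.Yv k ω ≤ E.dist n ω := by
      rw [E.dist_eq_sum]
      have : (n:ℝ) * (1 - 2 / (d:ℝ)) = ∑ k ∈ Finset.range n, (1 - 2 / (d:ℝ)) := by
        rw [Finset.sum_const, Finset.card_range, nsmul_eq_mul]
      rw [this, Finset.mul_sum, ← Finset.sum_sub_distrib, ← Finset.sum_add_distrib]
      refine Finset.sum_le_sum fun k _ => ?_
      have := hle k
      simp only [Yv]
      have e2 : 2 / (d:ℝ) = 2 * (1 / d) := by ring
      rw [e2]
      linarith
    have : (0:ℝ) < E.dist n ω := by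
      refine lt_of_lt_of_le (mul_pos hnr hn) (le_of_eq_of_le ?_ hb)
      field_simp
    exact_mod_cast this
  refine ⟨hev, ?_⟩
  rw [tendsto_iff_norm_sub_tendsto_zero]
  refine squeeze_zero' (Eventually.of_forall fun n => norm_nonneg _) ?_ he0
  filter_upwards [hev] with n hn
  exact hpe n hn

/-- Number of visits to the root before time `n`. -/
def visits (E : ERW G d p Ω P) (n : ℕ) (ω : Ω) : ℝ :=
  ∑ k ∈ Finset.range n, if E.pos k ω = 1 then 1 else 0

theorem adp_visits (E : ERW G d p Ω P) (n : ℕ) : E.Adp n (E.visits n) :=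
  Adp.sum _ fun k hk => ((E.adp_pos k).mono (by rw [Finset.mem_range] at hk; omega)).comp
    (fun x => if x = 1 then (1:ℝ) else 0)

theorem decomp (E : ERW G d p Ω P) (hd : 3 ≤ d) (n : ℕ) (ω : Ω) :
    Real.sqrt n * ((E.dist n ω : ℝ) / n - ((d : ℝ) - 2) / d
              - (2 * (1 - p * d) / ((d : ℝ) - 1)) * E.Xi n ω)
      = (∑ k ∈ Finset.range n, E.Yv k ω) / √n + 2 / d * (E.visits n ω / √n) := by
  rcases Nat.eq_zero_or_pos n with h0 | h0
  · subst h0; simp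
  have hn : (0:ℝ) < n := by exact_mod_cast h0
  have hd3 : (3:ℝ) ≤ d := by exact_mod_cast hd
  have hd1 : (d:ℝ) - 1 ≠ 0 := by linarith
  have hd0 : (d:ℝ) ≠ 0 := by linarith
  have term : ∀ k, 1 - 2 * E.back k ω (E.g (k+1) ω) = E.Yv k ω
      + 2 / d * (if E.pos k ω = 1 then 1 else 0) + ((d:ℝ) - 2) / d
      + (2 * (1 - p * d) / ((d : ℝ) - 1))
        * ((E.ell k ω : ℝ) / k - (if 0 < E.dist k ω then 1 else 0) / d) := by
    intro k
    have e1 : (if 0 < E.dist k ω then (1:ℝ) else 0) = if E.pos k ω = 1 then 0 else 1 := by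
      by_cases h : E.pos k ω = 1
      · rw [if_pos h, if_neg]; rw [E.dist_pos_iff]; simpa using h
      · rw [if_neg h, if_pos]; rw [E.dist_pos_iff]; exact h
    rw [e1, Yv]
    by_cases h : E.pos k ω = 1
    · simp only [bq, ell, if_pos h, Nat.cast_zero, zero_div, sub_self, mul_zero]
      field_simp
      ring
    · have hk : k ≠ 0 := by
        rintro rfl; exact h rfl
      simp only [bq, ell, if_neg h, prb, dev, if_neg hk]
      have hk' : (k:ℝ) ≠ 0 := by exact_mod_cast hk
      field_simp
      ring
  have hsum : (E.dist n ω : ℝ) = ∑ k ∈ Finset.range n, E.Yv k ω + 2 / d * E.visits n ω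
      + n * (((d:ℝ) - 2) / d) + (2 * (1 - p * d) / ((d : ℝ) - 1)) * (n * E.Xi n ω) := by
    rw [E.dist_eq_sum]
    have hXi : (n:ℝ) * E.Xi n ω = ∑ k ∈ Finset.range n,
        ((E.ell k ω : ℝ) / k - (if 0 < E.dist k ω then 1 else 0) / d) := by
      unfold Xi
      rw [← mul_assoc, mul_one_div_cancel hn.ne', one_mul]
    rw [hXi, visits, Finset.sum_congr rfl fun k _ => term k, Finset.sum_add_distrib,
      Finset.sum_add_distrib, Finset.sum_add_distrib, ← Finset.mul_sum, ← Finset.mul_sum]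
    simp
  have hs : (0:ℝ) < √n := Real.sqrt_pos.2 hn
  have hsq : √(n:ℝ) * √n = n := Real.mul_self_sqrt hn.le
  have e : (E.dist n ω : ℝ) / n - ((d : ℝ) - 2) / d
      - (2 * (1 - p * d) / ((d : ℝ) - 1)) * E.Xi n ω
      = (∑ k ∈ Finset.range n, E.Yv k ω + 2 / d * E.visits n ω) / n := by
    rw [hsum]
    field_simp
    ring
  rw [e]
  have e5 : ∀ x : ℝ, √(n:ℝ) * (x / n) = x / √n := fun x => by
    rw [eq_div_iff hs.ne', div_eq_mul_inv]
    calc √(n:ℝ) * (x * (n:ℝ)⁻¹) * √(n:ℝ) = x * (√(n:ℝ) * √(n:ℝ)) * (n:ℝ)⁻¹ := by ring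
      _ = x := by rw [hsq, mul_assoc, mul_inv_cancel₀ hn.ne', mul_one]
  rw [e5]
  ring

theorem visits_tendsto (E : ERW G d p Ω P) (ω : Ω) (h : ∀ᶠ n in atTop, E.pos n ω ≠ 1) :
    Tendsto (fun n : ℕ => E.visits n ω / √n) atTop (nhds 0) := by
  obtain ⟨N, hN⟩ := eventually_atTop.1 h
  have hb : ∀ n, E.visits n ω ≤ N := by
    intro n
    induction n with
    | zero => simp [visits]
    | succ n ih =>
      by_cases hn : n < N
      · calc E.visits (n+1) ω ≤ ∑ k ∈ Finset.range (n+1), (1:ℝ) := by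
              unfold visits
              refine Finset.sum_le_sum fun k _ => ?_
              split_ifs <;> norm_num
          _ = ((n+1 : ℕ) : ℝ) := by simp
          _ ≤ N := by exact_mod_cast hn
      · unfold visits at *
        rw [Finset.sum_range_succ, if_neg (hN n (by omega)), add_zero]
        exact ih
  have h0 : ∀ n, 0 ≤ E.visits n ω := fun n =>
    Finset.sum_nonneg fun k _ => by split_ifs <;> norm_num
  have hl : Tendsto (fun n : ℕ => (N:ℝ) / √n) atTop (nhds 0) :=
    tendsto_const_nhds.div_atTop (Real.tendsto_sqrt_atTop.comp tendsto_natCast_atTop_atTop)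
  refine squeeze_zero (fun n => div_nonneg (h0 n) (Real.sqrt_nonneg _)) (fun n => ?_) hl
  exact div_le_div_of_nonneg_right (hb n) (Real.sqrt_nonneg _)

theorem charfun_lim (E : ERW G d p Ω P) [IsProbabilityMeasure P] (hd : 3 ≤ d) (hp0 : 0 ≤ p)
    (hp1 : p < 1) (t : ℝ) :
    Tendsto (fun n : ℕ => ∫ ω, Complex.exp (t * (((∑ k ∈ Finset.range n, E.Yv k ω) / √n
      + 2 / d * (E.visits n ω / √n) : ℝ) : ℂ) * Complex.I) ∂P) atTop
      (nhds (Complex.exp (-((4 * ((d : ℝ) - 1) / (d : ℝ) ^ 2) * t^2 / 2 : ℝ)))) := by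
  have hd3 : (3:ℝ) ≤ d := by exact_mod_cast hd
  have hd0 : (d:ℝ) ≠ 0 := by linarith
  have htr := E.transient hd hp0 hp1
  have hclt := aux_mclt P E.Yv (fun n ω => 4 * E.bq n ω * (1 - E.bq n ω))
    (fun n => (E.adp_Yv n).measurable)
    (fun n => ((E.adp_bq n).comp fun x => 4 * x * (1 - x)).measurable) 4 (by norm_num)
    (fun n ω => (E.Yv_bound hd hp0 hp1 n ω).trans (by norm_num))
    (fun n ω => by
      have := E.bq_mem hd hp0 hp1 n ω
      rw [abs_le]; constructor <;> nlinarith)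
    (4 * ((d : ℝ) - 1) / (d : ℝ) ^ 2)
    (div_nonneg (by linarith) (by positivity))
    (by
      filter_upwards [htr] with ω hω
      have h := (hω.2.const_mul 4).mul ((tendsto_const_nhds (x := (1:ℝ))).sub hω.2)
      convert h using 2
      field_simp)
    (fun n s => E.Yv_orth hd n _ ((E.adp_sumYv n).comp
      fun x : ℝ => Complex.exp (s * (x : ℂ) * Complex.I)))
    (fun n s => E.Yv_var hd n _ ((E.adp_sumYv n).comp
      fun x : ℝ => Complex.exp (s * (x : ℂ) * Complex.I))) t
  have hmY : ∀ n, Measurable (fun ω => ∑ k ∈ Finset.range n, E.Yv k ω) := fun n =>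
    (E.adp_sumYv n).measurable
  have hmv : ∀ n, Measurable (E.visits n) := fun n => (E.adp_visits n).measurable
  set A : ℕ → Ω → ℂ := fun n ω => Complex.exp ((t / √n : ℝ)
    * ((∑ k ∈ Finset.range n, E.Yv k ω : ℝ) : ℂ) * Complex.I) with hA
  set R : ℕ → Ω → ℂ := fun n ω =>
    Complex.exp ((t * (2 / d * (E.visits n ω / √n)) : ℝ) * Complex.I) with hR
  have hAn : ∀ n ω, ‖A n ω‖ = 1 := fun n ω => by
    simp only [hA]; rw [← Complex.ofReal_mul, Complex.norm_exp_ofReal_mul_I]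
  have hRn : ∀ n ω, ‖R n ω‖ = 1 := fun n ω => by
    simp only [hR]; rw [Complex.norm_exp_ofReal_mul_I]
  have hAm : ∀ n, Measurable (A n) := fun n => by
    have := hmY n
    simp only [hA]; fun_prop
  have hRm : ∀ n, Measurable (R n) := fun n => by
    have := hmv n
    simp only [hR]; fun_prop
  have e : ∀ n ω, Complex.exp (t * (((∑ k ∈ Finset.range n, E.Yv k ω) / √n
      + 2 / d * (E.visits n ω / √n) : ℝ) : ℂ) * Complex.I) = A n ω + A n ω * (R n ω - 1) := by
    intro n ω
    have : A n ω + A n ω * (R n ω - 1) = A n ω * R n ω := by ring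
    rw [this]
    simp only [hA, hR]
    rw [← Complex.exp_add]
    congr 1
    push_cast
    ring
  simp_rw [e]
  have hAi : ∀ n, Integrable (A n) P := fun n =>
    Integrable.of_bound (hAm n).aestronglyMeasurable 1 (Eventually.of_forall fun ω => (hAn n ω).le)
  have hb : ∀ n ω, ‖A n ω * (R n ω - 1)‖ ≤ 2 := fun n ω => by
    rw [norm_mul, hAn, one_mul]
    refine (norm_sub_le _ _).trans ?_
    rw [hRn]; norm_num
  have hm2 : ∀ n, AEStronglyMeasurable (fun ω => A n ω * (R n ω - 1)) P := fun n =>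
    ((hAm n).mul ((hRm n).sub_const 1)).aestronglyMeasurable
  have hAR : ∀ n, Integrable (fun ω => A n ω * (R n ω - 1)) P := fun n =>
    Integrable.of_bound (hm2 n) 2 (Eventually.of_forall (hb n))
  have hz : Tendsto (fun n => ∫ ω, A n ω * (R n ω - 1) ∂P) atTop (nhds 0) := by
    have : Tendsto (fun n => ∫ ω, A n ω * (R n ω - 1) ∂P) atTop (nhds (∫ ω, (0:ℂ) ∂P)) := by
      refine tendsto_integral_of_dominated_convergence (fun _ => 2) hm2 (integrable_const _)
        (fun n => Eventually.of_forall (hb n)) ?_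
      filter_upwards [htr] with ω hω
      have hv := ((E.visits_tendsto ω hω.1).const_mul (2 / (d:ℝ))).const_mul t
      rw [mul_zero, mul_zero] at hv
      have hc : Continuous fun x : ℝ => Complex.exp ((x:ℂ) * Complex.I) - 1 := by fun_prop
      have h3 := (hc.tendsto 0).comp hv
      simp only [Complex.ofReal_zero, zero_mul, Complex.exp_zero, sub_self] at h3
      rw [tendsto_zero_iff_norm_tendsto_zero] at h3 ⊢
      refine h3.congr fun n => ?_
      rw [norm_mul, hAn, one_mul]
      rfl
    simpa using this
  have := hclt.add hz
  rw [add_zero] at this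
  refine this.congr fun n => ?_
  rw [integral_add (hAi n) (hAR n)]

end ERW

/-- central limit theorem for the compensated speed:
`√n (Δ n / n - (d-2)/d - (2(1-pd)/(d-1)) Ξ n)` converges in distribution to
`N(0, 4(d-1)/d²)` (stated via convergence of integrals of bounded continuous
functions). -/
theorem erw_fluctuations
    {G : Type*} [Group G] [DecidableEq G] {Ω : Type*} [MeasurableSpace Ω]
    {P : Measure Ω} [IsProbabilityMeasure P]
    (d : ℕ) (hd : 3 ≤ d) (p : ℝ) (hp0 : 0 ≤ p) (hp1 : p < 1)
    (E : ERW G d p Ω P) :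
    ∀ f : BoundedContinuousFunction ℝ ℝ,
      Tendsto (fun n : ℕ =>
          ∫ ω, f (Real.sqrt n *
            ((E.dist n ω : ℝ) / n - ((d : ℝ) - 2) / d
              - (2 * (1 - p * d) / ((d : ℝ) - 1)) * E.Xi n ω)) ∂P)
        atTop
        (nhds (∫ x, f x
          ∂(gaussianReal 0 (Real.toNNReal (4 * ((d : ℝ) - 1) / (d : ℝ) ^ 2))))) := by
  intro f
  have hv : 0 ≤ 4 * ((d : ℝ) - 1) / (d : ℝ) ^ 2 := by
    have hd3 : (3:ℝ) ≤ d := by exact_mod_cast hd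
    exact div_nonneg (by linarith) (by positivity)
  simp_rw [E.decomp hd]
  set T : ℕ → Ω → ℝ := fun n ω => (∑ k ∈ Finset.range n, E.Yv k ω) / √n
      + 2 / d * (E.visits n ω / √n) with hT
  have hTm : ∀ n, Measurable (T n) := fun n =>
    ((E.adp_sumYv n).comp₂ (E.adp_visits n)
      (fun x y => x / √n + 2 / (d:ℝ) * (y / √n))).measurable
  let μ : ℕ → ProbabilityMeasure ℝ := fun n =>
    ⟨P.map (T n), Measure.isProbabilityMeasure_map (hTm n).aemeasurable⟩
  let ν : ProbabilityMeasure ℝ :=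
    ⟨gaussianReal 0 (Real.toNNReal (4 * ((d : ℝ) - 1) / (d : ℝ) ^ 2)), inferInstance⟩
  have hlim : Tendsto μ atTop (nhds ν) := by
    refine ProbabilityMeasure.tendsto_iff_tendsto_charFun.2 fun t => ?_
    have h := E.charfun_lim hd hp0 hp1 t
    have e1 : charFun (ν : Measure ℝ) t
        = Complex.exp (-((4 * ((d : ℝ) - 1) / (d : ℝ) ^ 2) * t^2 / 2 : ℝ)) := by
      change charFun (gaussianReal 0 _) t = _
      rw [charFun_gaussianReal, Real.coe_toNNReal _ hv]
      congr 1
      push_cast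
      ring
    rw [e1]
    refine h.congr fun n => ?_
    change _ = charFun (P.map (T n)) t
    rw [charFun_apply_real, integral_map (hTm n).aemeasurable (by fun_prop)]
  have h := (ProbabilityMeasure.tendsto_iff_forall_integral_tendsto.1 hlim) f
  refine h.congr fun n => ?_
  change ∫ x, f x ∂(P.map (T n)) = _
  rw [integral_map (hTm n).aemeasurable f.continuous.aestronglyMeasurable]

end
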